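/- arXiv:2603.18392 — 5 statements merged into one kernel-verified Lean document; each statement's English description precedes it below -/
import Mathlib

section
/- Let n ≥ 2, let v = (v_1,…,v_n) ∈ ℤ^n be nontrivial, and let 1 ≤ i ≤ n−1. Let v' be the vector obtained from v by the elementary Hurwitz move σ_i, i.e. v'_i = v_{i+1}, v'_{i+1} = 2v_{i+1} − v_i, and v'_j = v_j for j ∉ {i, i+1}. Then the multiset of residues of the entries of v' modulo 2d(v) equals the multiset of residues of the entries of v modulo 2d(v); that is, M(v') = M(v). -/
/-- The alternating sum `Δ(v) = Σ (−1)^{i−1} v_i` (0-indexed: `Σ (−1)^i v_i`). -/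
def altSum {n : ℕ} (v : Fin n → ℤ) : ℤ := ∑ i : Fin n, (-1 : ℤ) ^ (i : ℕ) * v i

/-- A vector is trivial if all its entries are equal. -/
def IsTrivialVec {n : ℕ} (v : Fin n → ℤ) : Prop := ∀ i j, v i = v j

/-- `d(v)`: the (nonnegative) greatest common divisor of all differences of entries. -/
def dval {n : ℕ} (v : Fin n → ℤ) : ℕ :=
  (Finset.univ : Finset (Fin n × Fin n)).gcd fun p => (v p.1 - v p.2).natAbs

/-- `k(v)`: the 2-adic valuation of `d(v)`. -/
def kval {n : ℕ} (v : Fin n → ℤ) : ℕ := padicValNat 2 (dval v)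

/-- The multiset of residues of the entries of `v` modulo `2d`. -/
def MresMod {n : ℕ} (v : Fin n → ℤ) (d : ℕ) : Multiset ℤ :=
  (Finset.univ.val : Multiset (Fin n)).map fun i => v i % (2 * (d : ℤ))

/-- `M(v)`: the multiset of residues of the entries of `v` modulo `2d(v)`. -/
def Mres {n : ℕ} (v : Fin n → ℤ) : Multiset ℤ := MresMod v (dval v)

/-- `v'` is obtained from `v` by an elementary Hurwitz move `σ_i`:
`(v_i, v_{i+1}) ↦ (v_{i+1}, 2v_{i+1} − v_i)`, all other entries unchanged. -/
def IsHurwitzMove {n : ℕ} (v v' : Fin n → ℤ) : Prop :=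
  ∃ (i : ℕ) (hi : i + 1 < n),
    v' ⟨i, Nat.lt_of_succ_lt hi⟩ = v ⟨i + 1, hi⟩ ∧
    v' ⟨i + 1, hi⟩ = 2 * v ⟨i + 1, hi⟩ - v ⟨i, Nat.lt_of_succ_lt hi⟩ ∧
    ∀ j : Fin n, (j : ℕ) ≠ i → (j : ℕ) ≠ i + 1 → v' j = v j

/-- Hurwitz equivalence: a finite sequence of elementary Hurwitz moves and inverses. -/
def HurwitzEquiv {n : ℕ} (v w : Fin n → ℤ) : Prop :=
  Relation.ReflTransGen (fun a b => IsHurwitzMove a b ∨ IsHurwitzMove b a) v w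

theorem dvd_dval_iff {n : ℕ} (v : Fin n → ℤ) (e : ℕ) :
    e ∣ dval v ↔ ∀ a b, (e : ℤ) ∣ v a - v b := by
  unfold dval
  rw [Finset.dvd_gcd_iff]
  constructor
  · intro h a b
    exact Int.natCast_dvd.mpr (h (a, b) (Finset.mem_univ _))
  · intro h p _
    exact Int.natCast_dvd.mp (h p.1 p.2)

theorem move_key {n : ℕ} {v v' : Fin n → ℤ} (h : IsHurwitzMove v v') :
    ∃ s : Equiv.Perm (Fin n), ∃ a b : Fin n, v b - v a = v' b - v' a ∧
      ∀ e : ℤ, e ∣ v b - v a → ∀ x, 2 * e ∣ v' x - v (s x) := by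
  obtain ⟨i, hi, h1, h2, h3⟩ := h
  refine ⟨Equiv.swap ⟨i, Nat.lt_of_succ_lt hi⟩ ⟨i + 1, hi⟩, ⟨i, Nat.lt_of_succ_lt hi⟩,
    ⟨i + 1, hi⟩, by rw [h1, h2]; ring, ?_⟩
  rintro e ⟨k, hk⟩ x
  by_cases hx : x = ⟨i, Nat.lt_of_succ_lt hi⟩
  · subst hx
    rw [Equiv.swap_apply_left, h1, sub_self]
    exact dvd_zero _
  by_cases hy : x = ⟨i + 1, hi⟩
  · subst hy
    rw [Equiv.swap_apply_right, h2]
    exact ⟨k, by linear_combination 2 * hk⟩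
  rw [Equiv.swap_apply_of_ne_of_ne hx hy,
    h3 x (fun h => hx (Fin.ext h)) (fun h => hy (Fin.ext h)), sub_self]
  exact dvd_zero _

theorem dval_move {n : ℕ} {v v' : Fin n → ℤ} (h : IsHurwitzMove v v') : dval v' = dval v := by
  obtain ⟨s, a, b, hab, hs⟩ := move_key h
  apply Nat.dvd_antisymm
  · have hd := (dvd_dval_iff v' (dval v')).mp dvd_rfl
    have hs' := hs (dval v') (hab ▸ hd b a)
    rw [dvd_dval_iff]
    intro x y
    have hx := dvd_of_mul_left_dvd (hs' (s.symm x))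
    have hy := dvd_of_mul_left_dvd (hs' (s.symm y))
    rw [Equiv.apply_symm_apply] at hx hy
    have := dvd_add (dvd_sub (hd (s.symm x) (s.symm y)) hx) hy
    have e : v x - v y = v' (s.symm x) - v' (s.symm y) - (v' (s.symm x) - v x)
        + (v' (s.symm y) - v y) := by ring
    rw [e]
    exact this
  · have hd := (dvd_dval_iff v (dval v)).mp dvd_rfl
    have hs' := hs (dval v) (hd b a)
    rw [dvd_dval_iff]
    intro x y
    have hx := dvd_of_mul_left_dvd (hs' x)
    have hy := dvd_of_mul_left_dvd (hs' y)
    have := dvd_sub (dvd_add (hd (s x) (s y)) hx) hy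
    have e : v' x - v' y = v (s x) - v (s y) + (v' x - v (s x)) - (v' y - v (s y)) := by ring
    rw [e]
    exact this

theorem MresMod_move {n : ℕ} {v v' : Fin n → ℤ} (h : IsHurwitzMove v v') :
    MresMod v' (dval v) = MresMod v (dval v) := by
  obtain ⟨s, a, b, hab, hs⟩ := move_key h
  have hs' := hs (dval v) ((dvd_dval_iff v (dval v)).mp dvd_rfl b a)
  unfold MresMod
  have e : (fun i => v' i % (2 * (dval v : ℤ))) = (fun i => v i % (2 * (dval v : ℤ))) ∘ s := by
    funext x
    exact Int.emod_eq_emod_iff_emod_sub_eq_zero.mpr (Int.emod_eq_zero_of_dvd (hs' x))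
  rw [e, ← Multiset.map_map]
  congr 1
  exact Multiset.map_univ_val_equiv s

/-- An elementary Hurwitz move preserves the multiset of residues modulo 2d(v);
that is, M(v') = M(v). -/
theorem stmt_2 (n : ℕ) (hn : 2 ≤ n) (v v' : Fin n → ℤ)
    (hv : ¬ IsTrivialVec v)
    (h : IsHurwitzMove v v') :
    MresMod v' (dval v) = MresMod v (dval v) ∧ Mres v' = Mres v := by
  refine ⟨MresMod_move h, ?_⟩
  unfold Mres
  rw [dval_move h]
  exact MresMod_move h
end

section
/- Let m ≥ 2. For any nontrivial vector v ∈ ℤ^{2m}, there exist integers a and λ and an index i with 1 < i < 2m such that v is Hurwitz equivalent to the vector (a,…,a, a+λd(v), a+d(v),…,a+d(v)), whose first i−1 entries equal a, whose i-th entry equals a + λ·d(v), and whose last 2m−i entries equal a + d(v). -/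
inductive HStep : List ℤ → List ℤ → Prop
  | mk (L R : List ℤ) (x y : ℤ) : HStep (L ++ x :: y :: R) (L ++ y :: (2 * y - x) :: R)

def HE (l l' : List ℤ) : Prop := Relation.EqvGen HStep l l'

theorem HE.refl (l : List ℤ) : HE l l := Relation.EqvGen.refl l
theorem HE.symm {l l' : List ℤ} (h : HE l l') : HE l' l := Relation.EqvGen.symm _ _ h
theorem HE.trans {l l' l'' : List ℤ} (h : HE l l') (h' : HE l' l'') : HE l l'' :=
  Relation.EqvGen.trans _ _ _ h h'

theorem HE.ctx (A B : List ℤ) {l l' : List ℤ} (h : HE l l') :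
    HE (A ++ (l ++ B)) (A ++ (l' ++ B)) := by
  unfold HE at h
  induction h with
  | rel x y h =>
    obtain ⟨L, R, x, y⟩ := h
    have := HStep.mk (A ++ L) (R ++ B) x y
    exact Relation.EqvGen.rel _ _ (by simpa using this)
  | refl x => exact HE.refl _
  | symm x y _ ih => exact ih.symm
  | trans x y z _ _ ih1 ih2 => exact ih1.trans ih2

theorem HE.left (A : List ℤ) {l l' : List ℤ} (h : HE l l') : HE (A ++ l) (A ++ l') := by
  simpa using h.ctx A []
theorem HE.right (B : List ℤ) {l l' : List ℤ} (h : HE l l') : HE (l ++ B) (l' ++ B) := by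
  simpa using h.ctx [] B
theorem HE.cons (a : ℤ) {l l' : List ℤ} (h : HE l l') : HE (a :: l) (a :: l') :=
  h.left [a]

theorem HE.s (x y : ℤ) (R : List ℤ) : HE (x :: y :: R) (y :: (2 * y - x) :: R) :=
  Relation.EqvGen.rel _ _ (HStep.mk [] R x y)

/-- congruence of entries -/
def AllCong (k c : ℤ) (l : List ℤ) : Prop := ∀ x ∈ l, k ∣ x - c

theorem HE.cong (k c : ℤ) {l l' : List ℤ} (h : HE l l') :
    AllCong k c l ↔ AllCong k c l' := by
  unfold HE at h
  induction h with
  | rel x y h =>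
    obtain ⟨L, R, x, y⟩ := h
    have key : (k ∣ x - c ∧ k ∣ y - c) ↔ (k ∣ y - c ∧ k ∣ 2 * y - x - c) := by
      constructor
      · rintro ⟨h1, h2⟩
        refine ⟨h2, ?_⟩
        have := (h2.mul_left 2).sub h1
        ring_nf at this ⊢; exact this
      · rintro ⟨h1, h2⟩
        refine ⟨?_, h1⟩
        have := (h1.mul_left 2).sub h2
        ring_nf at this ⊢; exact this
    simp only [AllCong, List.forall_mem_append, List.forall_mem_cons]
    tauto
  | refl x => rfl
  | symm x y _ ih => exact ih.symm
  | trans x y z _ _ ih1 ih2 => exact ih1.trans ih2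

theorem HE.length {l l' : List ℤ} (h : HE l l') : l.length = l'.length := by
  unfold HE at h
  induction h with
  | rel x y h => obtain ⟨L, R, x, y⟩ := h; simp
  | refl x => rfl
  | symm x y _ ih => exact ih.symm
  | trans x y z _ _ ih1 ih2 => exact ih1.trans ih2

/-- moves on differences of triples -/
def tri (x p q : ℤ) : List ℤ := [x, x + p, x + p + q]

theorem tri_s1 (x p q : ℤ) : HE (tri x p q) (tri (x + p) p (q - p)) := by
  have := HE.s x (x + p) [x + p + q]
  unfold tri; convert this using 4 <;> ring_nf
theorem tri_s1' (x p q : ℤ) : HE (tri x p q) (tri (x - p) p (q + p)) := by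
  have := (tri_s1 (x - p) p (q + p)).symm
  convert this using 2 <;> ring
theorem tri_s2 (x p q : ℤ) : HE (tri x p q) (tri x (p + q) q) := by
  have := (HE.s (x + p) (x + p + q) []).cons x
  unfold tri
  have e1 : x + (p + q) = x + p + q := by ring
  have e2 : x + p + q + q = 2 * (x + p + q) - (x + p) := by ring
  rw [e1, e2]; exact this
theorem tri_s2' (x p q : ℤ) : HE (tri x p q) (tri x (p - q) q) := by
  have := (tri_s2 x (p - q) q).symm
  convert this using 2; ring

theorem tri_zero (x q : ℤ) (hq : q ≠ 0) :
    ∃ c g : ℤ, 0 < g ∧ g ∣ q ∧ HE (tri x 0 q) (tri c 0 g) := by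
  rcases lt_or_gt_of_ne hq with h | h
  · have h1 := tri_s2 x 0 q
    have h2 := h1.trans (tri_s1 _ _ _)
    have h3 := h2.trans (tri_s1 _ _ _)
    have h4 := h3.trans (tri_s2 _ _ _)
    refine ⟨x + (0 + q) + (0 + q), -q, by omega, by simp, ?_⟩
    convert h4 using 2 <;> ring
  · exact ⟨x, q, h, dvd_rfl, HE.refl _⟩

theorem tri_euclid (N : ℕ) : ∀ x p q : ℤ, p.natAbs + q.natAbs ≤ N → (p ≠ 0 ∨ q ≠ 0) →
    ∃ c g : ℤ, 0 < g ∧ g ∣ p ∧ g ∣ q ∧ HE (tri x p q) (tri c 0 g) := by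
  induction N with
  | zero => intro x p q h h'; omega
  | succ N ih =>
    intro x p q h h'
    by_cases hp : p = 0
    · subst hp
      obtain ⟨c, g, h1, h2, h3⟩ := tri_zero x q (by simpa using h')
      exact ⟨c, g, h1, dvd_zero _, h2, h3⟩
    by_cases hq : q = 0
    · subst hq
      obtain ⟨c, g, h1, h2, h3⟩ := tri_zero (x - p) p hp
      refine ⟨c, g, h1, h2, dvd_zero _, HE.trans ?_ h3⟩
      have := (tri_s1' x p 0).trans (tri_s2' _ _ _)
      convert this using 2 <;> ring
    have four : (p - q).natAbs < p.natAbs ∨ (p + q).natAbs < p.natAbs ∨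
        (q - p).natAbs < q.natAbs ∨ (q + p).natAbs < q.natAbs := by omega
    rcases four with f | f | f | f
    · obtain ⟨c, g, h1, h2, h3, h4⟩ := ih x (p - q) q (by omega) (by omega)
      exact ⟨c, g, h1, (dvd_sub_left h3).1 h2, h3, (tri_s2' x p q).trans h4⟩
    · obtain ⟨c, g, h1, h2, h3, h4⟩ := ih x (p + q) q (by omega) (by omega)
      exact ⟨c, g, h1, (dvd_add_left h3).1 h2, h3, (tri_s2 x p q).trans h4⟩
    · obtain ⟨c, g, h1, h2, h3, h4⟩ := ih (x + p) p (q - p) (by omega) (by omega)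
      exact ⟨c, g, h1, h2, (dvd_sub_left h2).1 h3, (tri_s1 x p q).trans h4⟩
    · obtain ⟨c, g, h1, h2, h3, h4⟩ := ih (x - p) p (q + p) (by omega) (by omega)
      exact ⟨c, g, h1, h2, (dvd_add_left h2).1 h3, (tri_s1' x p q).trans h4⟩

theorem triple (x y z : ℤ) (h : x ≠ y ∨ y ≠ z) :
    ∃ c g : ℤ, 0 < g ∧ g ∣ y - x ∧ g ∣ z - y ∧ HE [x, y, z] [c, c, c + g] := by
  obtain ⟨c, g, h1, h2, h3, h4⟩ := tri_euclid _ x (y - x) (z - y) le_rfl (by omega)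
  refine ⟨c, g, h1, h2, h3, ?_⟩
  unfold tri at h4
  convert h4 using 4 <;> ring_nf

theorem triple' (x y z : ℤ) : ∃ c c' : ℤ, HE [x, y, z] [c, c, c'] := by
  by_cases h : x ≠ y ∨ y ≠ z
  · obtain ⟨c, g, _, _, _, h4⟩ := triple x y z h
    exact ⟨_, _, h4⟩
  · push Not at h
    obtain ⟨rfl, rfl⟩ := h
    exact ⟨_, _, HE.refl _⟩

/-- equal pair passes freely -/
theorem pass1 (x z : ℤ) (R : List ℤ) : HE (x :: x :: z :: R) (z :: x :: x :: R) := by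
  have h1 := HE.s z x (x :: R)
  have h2 := (HE.s (2 * x - z) x R).cons x
  have h3 := (h1.trans h2).symm
  convert h3 using 4; ring

theorem pass (x : ℤ) (M R : List ℤ) : HE (x :: x :: (M ++ R)) (M ++ x :: x :: R) := by
  induction M with
  | nil => exact HE.refl _
  | cons z M ih => exact (pass1 x z _).trans (ih.cons z)

theorem reflect1 (x z : ℤ) (R : List ℤ) :
    HE (x :: x :: z :: R) ((2 * z - x) :: (2 * z - x) :: z :: R) := by
  have h1 := (HE.s x z R).cons x
  have h2 := HE.s x z ((2 * z - x) :: R)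
  exact (h1.trans h2).trans (pass1 (2 * z - x) z R).symm

theorem reflect (x z : ℤ) (M : List ℤ) (h : z ∈ M) :
    HE (x :: x :: M) ((2 * z - x) :: (2 * z - x) :: M) := by
  obtain ⟨A, B, rfl⟩ := List.append_of_mem h
  exact ((pass x A _).trans ((reflect1 x z B).left A)).trans (pass _ A _).symm

/-- difference pair passes, shifting -/
theorem dpass (b e z : ℤ) (R : List ℤ) :
    HE (b :: (b + e) :: z :: R) ((z - 2 * e) :: b :: (b + e) :: R) := by
  have h1 := HE.s (z - 2 * e) b ((b + e) :: R)
  have h2 := (HE.s (2 * b - (z - 2 * e)) (b + e) R).cons b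
  have h3 := (h1.trans h2).symm
  convert h3 using 4; ring

theorem slide_nat (b e : ℤ) (R : List ℤ) (k : ℕ) :
    HE (b :: (b + e) :: R) ((b + k * e) :: (b + k * e + e) :: R) := by
  induction k with
  | zero => simpa using HE.refl _
  | succ k ih =>
    refine ih.trans ?_
    have := HE.s (b + k * e) (b + k * e + e) R
    convert this using 2
    · push_cast; ring
    · congr 1; push_cast; ring

theorem slide (b e : ℤ) (R : List ℤ) (k : ℤ) :
    HE (b :: (b + e) :: R) ((b + k * e) :: (b + k * e + e) :: R) := by
  obtain ⟨n, rfl | rfl⟩ := k.eq_nat_or_neg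
  · exact slide_nat b e R n
  · have := (slide_nat (b + -n * e) e R n).symm
    convert this using 2
    · ring
    · congr 1; ring

def NF (a lam e : ℤ) (i j : ℕ) : List ℤ :=
  List.replicate (i + 1) a ++ (a + lam * e) :: List.replicate (j + 1) (a + e)

theorem absorb (N : ℕ) : ∀ (k a lam e : ℤ) (i j : ℕ), 2 * k.natAbs + (if k < 0 then 1 else 0) ≤ N →
    ∃ i' j', HE ((a + k * e) :: (a + k * e) :: NF a lam e i j) (NF a lam e i' j') := by
  induction N with
  | zero =>
    intro k a lam e i j h
    obtain rfl : k = 0 := by omega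
    refine ⟨i + 2, j, ?_⟩
    simpa [NF, List.replicate_succ] using HE.refl _
  | succ N ih =>
    intro k a lam e i j h
    by_cases hk : k < 0
    · obtain ⟨i', j', h'⟩ := ih (-k) a lam e i j (by split_ifs at h ⊢ <;> omega)
      refine ⟨i', j', HE.trans ?_ h'⟩
      have := reflect (a + k * e) a (NF a lam e i j) (by simp [NF])
      convert this using 2
      · ring
      · congr 1; ring
    by_cases h0 : k = 0
    · subst h0
      refine ⟨i + 2, j, ?_⟩
      simpa [NF, List.replicate_succ] using HE.refl _
    by_cases h1 : k = 1
    · subst h1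
      refine ⟨i, j + 2, ?_⟩
      have := pass (a + 1 * e) (List.replicate (i + 1) a ++ [a + lam * e])
        (List.replicate (j + 1) (a + e))
      simpa [NF, List.replicate_succ] using this
    · obtain ⟨i', j', h'⟩ := ih (k - 2) a lam e i j (by split_ifs at h ⊢ <;> omega)
      refine ⟨i', j', HE.trans ?_ h'⟩
      have h1 := reflect (a + k * e) (a + e) (NF a lam e i j) (by simp [NF])
      have h2 := reflect (2 * (a + e) - (a + k * e)) a (NF a lam e i j) (by simp [NF])
      have := h1.trans h2
      convert this using 2
      · ring
      · congr 1; ring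

theorem main_claim (N : ℕ) : ∀ (b e : ℤ) (R : List ℤ), R.length ≤ N → R ≠ [] →
    AllCong e b R → ∃ a lam i j, HE (b :: (b + e) :: R) (NF a lam e i j) := by
  induction N with
  | zero => intro b e R h h'; simp at h; exact absurd h h'
  | succ N ih =>
    intro b e R hlen hne hc
    match R, hlen, hne, hc with
    | [z], _, _, hc =>
      obtain ⟨k, hk⟩ := hc z (by simp)
      have h := slide b e [z] (k - 1)
      refine ⟨z - e, 1, 0, 0, ?_⟩
      have e1 : b + (k - 1) * e = z - e := by linear_combination -hk
      rw [e1] at h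
      simpa [NF] using h
    | [y, z], _, _, hc =>
      obtain ⟨k, hk⟩ := hc y (by simp)
      obtain ⟨l, hl⟩ := hc z (by simp)
      have h := slide b e [y, z] (k - 1)
      refine ⟨y - e, l - k + 1, 0, 1, ?_⟩
      have e1 : b + (k - 1) * e = y - e := by linear_combination -hk
      have e2 : y - e + (l - k + 1) * e = z := by linear_combination hk - hl
      rw [e1] at h
      have h2 := (pass1 y z []).cons (y - e)
      simp only [sub_add_cancel] at h
      simpa [NF, e2, List.replicate_succ] using h.trans h2
    | z1 :: z2 :: z3 :: R', hlen, _, hc =>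
      obtain ⟨c, c', h3⟩ := triple' z1 z2 z3
      have hA : HE (z1 :: z2 :: z3 :: R') (c :: c :: c' :: R') := h3.right R'
      have hc2 := (hA.cong e b).1 hc
      have hB := hA.left [b, b + e]
      have hC := (pass c [b, b + e] (c' :: R')).symm
      obtain ⟨a, lam, i, j, hD⟩ := ih b e (c' :: R') (by simp at hlen ⊢; omega) (by simp)
        (fun x hx => hc2 x (by simp at hx ⊢; tauto))
      have hE : AllCong e b (b :: (b + e) :: c' :: R') := by
        intro x hx
        simp only [List.mem_cons] at hx
        rcases hx with rfl | rfl | hx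
        · simp
        · simp
        · exact hc2 x (by simp; tauto)
      have ha := (hD.cong e b).1 hE a (by simp [NF])
      have hcc := hc2 c (by simp)
      obtain ⟨k, hk⟩ := ha
      obtain ⟨l, hl⟩ := hcc
      have hF := hD.left [c, c]
      obtain ⟨i', j', hG⟩ := absorb _ (l - k) a lam e i j le_rfl
      have e1 : a + (l - k) * e = c := by linear_combination hk - hl
      rw [e1] at hG
      exact ⟨a, lam, i', j', ((hB.trans hC).trans hF).trans hG⟩

theorem exists_adj (l : List ℤ) (hl : 3 ≤ l.length) (h : ∀ c, ¬ AllCong 0 c l) :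
    ∃ (L R : List ℤ) (b e : ℤ), 0 < e ∧ HE l (L ++ b :: (b + e) :: R) := by
  induction l with
  | nil => simp at hl
  | cons x l ih =>
    match l, hl, ih with
    | [y, z], _, _ =>
      have : x ≠ y ∨ y ≠ z := by
        by_contra hh
        push Not at hh
        obtain ⟨rfl, rfl⟩ := hh
        exact h x (by simp [AllCong])
      obtain ⟨c, g, hg, _, _, h4⟩ := triple x y z this
      exact ⟨[c], [], c, g, hg, h4⟩
    | y :: z :: u :: l', _, ih =>
      by_cases hxy : x ≠ y ∨ y ≠ z
      · obtain ⟨c, g, hg, _, _, h4⟩ := triple x y z hxy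
        exact ⟨[c], u :: l', c, g, hg, by simpa using h4.right (u :: l')⟩
      · push Not at hxy
        obtain ⟨rfl, rfl⟩ := hxy
        obtain ⟨L, R, b, e, he, hh⟩ := ih (by simp) (by
          intro c hc
          apply h c
          intro w hw
          apply hc
          simp at hw ⊢; tauto)
        exact ⟨x :: L, R, b, e, he, hh.cons x⟩

theorem toleft (L R : List ℤ) (b e : ℤ) :
    ∃ R', HE (L ++ b :: (b + e) :: R) (b :: (b + e) :: R') := by
  induction L with
  | nil => exact ⟨R, HE.refl _⟩
  | cons z L ih =>
    obtain ⟨R', h⟩ := ih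
    have h2 := (dpass b e (z + 2 * e) R').symm
    rw [add_sub_cancel_right] at h2
    exact ⟨_, (h.cons z).trans h2⟩

theorem min_cong (l : List ℤ) (e : ℤ) (he : 0 < e)
    (hmin : ∀ (L R : List ℤ) (b g : ℤ), 0 < g → HE l (L ++ b :: (b + g) :: R) → e ≤ g)
    (R : List ℤ) : ∀ (L : List ℤ) (b : ℤ), HE l (L ++ b :: (b + e) :: R) → AllCong e b R := by
  induction R with
  | nil => intro L b _ x hx; simp at hx
  | cons z R ih =>
    intro L b h x hx
    simp only [List.mem_cons] at hx
    rcases hx with rfl | hx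
    · obtain ⟨c, g, hg, h1, h2, h3⟩ := triple b (b + e) x (by left; omega)
      have := hmin (L ++ [c]) R c g hg (by simpa using h.trans (h3.ctx L R))
      rw [add_sub_cancel_left] at h1
      have := Int.le_of_dvd he h1
      obtain rfl : g = e := by omega
      have := h2.add (dvd_refl g)
      ring_nf at this ⊢; exact this
    · refine ih (L ++ [z - 2 * e]) b ?_ x hx
      simpa using h.trans ((dpass b e z R).left L)

theorem list_main (l : List ℤ) (hl : 3 ≤ l.length) (h : ∀ c, ¬ AllCong 0 c l) :
    ∃ a lam e i j, 0 < e ∧ HE l (NF a lam e i j) := by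
  classical
  have hex : ∃ n : ℕ, ∃ (L R : List ℤ) (b : ℤ), 0 < n ∧ HE l (L ++ b :: (b + (n : ℤ)) :: R) := by
    obtain ⟨L, R, b, e, he, hh⟩ := exists_adj l hl h
    refine ⟨e.toNat, L, R, b, by omega, ?_⟩
    rw [Int.toNat_of_nonneg he.le]; exact hh
  obtain ⟨L, R, b, hpos, hE⟩ := Nat.find_spec hex
  have hmin : ∀ (L R : List ℤ) (b g : ℤ), 0 < g → HE l (L ++ b :: (b + g) :: R) →
      ((Nat.find hex : ℕ) : ℤ) ≤ g := by
    intro L R b g hg hh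
    have := Nat.find_min' hex (m := g.toNat) ⟨L, R, b, by omega, by
      rw [Int.toNat_of_nonneg hg.le]; exact hh⟩
    omega
  obtain ⟨R', hR⟩ := toleft L R b (Nat.find hex)
  have hT := hE.trans hR
  have hc := min_cong l _ (by exact_mod_cast hpos) hmin R' [] b hT
  have hlen := hT.length
  obtain ⟨a, lam, i, j, hf⟩ := main_claim _ b _ R' le_rfl (by
    rintro rfl; simp at hlen; omega) hc
  exact ⟨a, lam, _, i, j, by exact_mod_cast hpos, hT.trans hf⟩

theorem hstep_move (l l' : List ℤ) (h : HStep l l') (n : ℕ) (hn : l.length = n) :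
    IsHurwitzMove (fun j : Fin n => l.getD j 0) (fun j : Fin n => l'.getD j 0) := by
  obtain ⟨L, R, x, y⟩ := h
  refine ⟨L.length, by simp at hn; omega, ?_, ?_, ?_⟩
  · simp [List.getD_append_right]
  · simp [List.getD_append_right]
  · intro j h1 h2
    rcases lt_or_ge (j : ℕ) L.length with h | h
    · simp only [List.getD_append _ _ _ _ h]
    · simp only [List.getD_append_right _ _ _ _ h]
      obtain ⟨k, hk⟩ : ∃ k, (j : ℕ) - L.length = k + 2 := ⟨j - L.length - 2, by omega⟩
      simp [hk]

theorem hurwitz_of_HE {l l' : List ℤ} (h : HE l l') (n : ℕ) (hn : l.length = n) :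
    HurwitzEquiv (fun j : Fin n => l.getD j 0) (fun j : Fin n => l'.getD j 0) := by
  unfold HE at h
  induction h with
  | rel x y h => exact Relation.ReflTransGen.single (Or.inl (hstep_move x y h n hn))
  | refl x => exact Relation.ReflTransGen.refl
  | symm x y hxy ih =>
    have hl : x.length = y.length := HE.length hxy
    have key := ih (by omega)
    unfold HurwitzEquiv at key ⊢
    rw [← Relation.reflTransGen_swap]
    refine Relation.ReflTransGen.mono ?_ _ _ key
    intro a b hab
    exact Or.symm hab
  | trans x y z hxy _ ih1 ih2 =>
    have hl : x.length = y.length := HE.length hxy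
    exact (ih1 hn).trans (ih2 (by omega))

theorem dvd_dval {n : ℕ} (v : Fin n → ℤ) (k : ℕ) :
    k ∣ dval v ↔ ∀ i j, (k : ℤ) ∣ v i - v j := by
  unfold dval
  rw [Finset.dvd_gcd_iff]
  simp [Int.natCast_dvd]

/-- Normal form under the Hurwitz action: any nontrivial vector in ℤ^{2m} (m ≥ 2) is
Hurwitz equivalent to (a,…,a, a+λd(v), a+d(v),…,a+d(v)) with the special entry at
some position t with 0 < t < 2m−1 (0-indexed; i.e. 1 < i < 2m, 1-indexed). -/
theorem stmt_3 (m : ℕ) (hm : 2 ≤ m) (v : Fin (2 * m) → ℤ)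
    (hv : ¬ IsTrivialVec v) :
    ∃ (a lam : ℤ) (t : ℕ), 0 < t ∧ t + 1 < 2 * m ∧
      HurwitzEquiv v (fun j =>
        if (j : ℕ) < t then a
        else if (j : ℕ) = t then a + lam * (dval v : ℤ)
        else a + (dval v : ℤ)) := by
  obtain ⟨a, lam, e, i, j, he, hE⟩ := list_main (List.ofFn v) (by simp; omega) (by
    intro c hc
    apply hv
    intro i j
    have h1 := hc (v i) (by simp)
    have h2 := hc (v j) (by simp)
    simp at h1 h2
    omega)
  have hlen := hE.length
  simp [NF] at hlen
  have hed : (dval v : ℤ) = e := by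
    lift e to ℕ using he.le
    congr 1
    apply Nat.dvd_antisymm
    · have hall : AllCong (dval v) (v ⟨0, by omega⟩) (List.ofFn v) := by
        intro x hx
        simp only [List.mem_ofFn] at hx
        obtain ⟨i, rfl⟩ := hx
        exact (dvd_dval v _).1 dvd_rfl _ _
      have h2 := (hE.cong _ _).1 hall
      have h3 := (h2 (a + e) (by simp [NF])).sub (h2 a (by simp [NF]))
      have : (dval v : ℤ) ∣ (e : ℤ) := by
        ring_nf at h3; exact h3
      exact_mod_cast this
    · rw [dvd_dval]
      have hall : AllCong (e : ℤ) a (NF a lam e i j) := by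
        intro x hx
        simp only [NF, List.mem_append, List.mem_cons, List.mem_replicate] at hx
        rcases hx with ⟨_, rfl⟩ | rfl | ⟨_, rfl⟩ <;> simp
      have h2 := (hE.cong _ _).2 hall
      intro p q
      have h3 := (h2 (v p) (by simp)).sub (h2 (v q) (by simp))
      simpa using h3
  refine ⟨a, lam, i + 1, by omega, by omega, ?_⟩
  have hfin := hurwitz_of_HE hE (2 * m) (by simp)
  rw [hed]
  convert hfin using 1
  · funext j; simp
  · funext p
    have hp := p.2
    simp only [NF]
    split_ifs with h1 h2
    · rw [List.getD_append _ _ _ _ (by simpa using h1)]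
      simp [List.getD_eq_getElem?_getD, List.getElem?_replicate, h1]
    · rw [List.getD_append_right _ _ _ _ (by simp; omega)]
      simp [h2]
    · rw [List.getD_append_right _ _ _ _ (by simp; omega)]
      obtain ⟨k, hk⟩ : ∃ k, (p : ℕ) - (i + 1) = k + 1 := ⟨p - (i + 1) - 1, by omega⟩
      have : k < j + 1 := by omega
      simp [hk, List.getElem?_replicate, this]
end

section
/- Let m ≥ 1. A (possibly trivial) vector v ∈ ℤ^{2m} satisfies Δ(v) = 0 if and only if there exist integers a, b and nonnegative integers r, s with r + s = m such that v is Hurwitz equivalent to the vector (a,…,a, b,…,b) whose first 2r entries equal a and whose last 2s entries equal b. -/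
inductive LS : List ℤ → List ℤ → Prop
  | mk (l r : List ℤ) (a b : ℤ) : LS (l ++ a :: b :: r) (l ++ b :: (2 * b - a) :: r)

def LE' (p q : List ℤ) : Prop := Relation.EqvGen LS p q

theorem LE'.refl (p : List ℤ) : LE' p p := Relation.EqvGen.refl p
theorem LE'.symm {p q : List ℤ} (h : LE' p q) : LE' q p := Relation.EqvGen.symm _ _ h
theorem LE'.trans {p q r : List ℤ} (h : LE' p q) (h' : LE' q r) : LE' p r :=
  Relation.EqvGen.trans _ _ _ h h'

theorem LE'.cons {p q : List ℤ} (c : ℤ) (h : LE' p q) : LE' (c :: p) (c :: q) := by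
  induction h with
  | rel x y h =>
    obtain ⟨l, r, a, b⟩ := h
    exact Relation.EqvGen.rel _ _ (LS.mk (c :: l) r a b)
  | refl x => exact LE'.refl _
  | symm x y _ ih => exact ih.symm
  | trans x y z _ _ ih1 ih2 => exact ih1.trans ih2

theorem LE'.head (a b : ℤ) (r : List ℤ) : LE' (a :: b :: r) (b :: (2 * b - a) :: r) :=
  Relation.EqvGen.rel _ _ (LS.mk [] r a b)

theorem LE'.head' (a b : ℤ) (r : List ℤ) : LE' (a :: b :: r) ((2 * a - b) :: a :: r) := by
  have h := LE'.head (2 * a - b) a r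
  rw [show 2 * a - (2 * a - b) = b by ring] at h
  exact h.symm

def las : List ℤ → ℤ
  | [] => 0
  | a :: l => a - las l

theorem LS.las_eq {p q : List ℤ} (h : LS p q) : las p = las q := by
  obtain ⟨l, r, a, b⟩ := h
  induction l with
  | nil => simp [las]; ring
  | cons c l ih => simp only [List.cons_append, las, ih]

theorem LE'.las_eq {p q : List ℤ} (h : LE' p q) : las p = las q := by
  induction h with
  | rel x y h => exact h.las_eq
  | refl x => rfl
  | symm x y _ ih => exact ih.symm
  | trans x y z _ _ ih1 ih2 => exact ih1.trans ih2

theorem LE'.length_eq {p q : List ℤ} (h : LE' p q) : p.length = q.length := by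
  induction h with
  | rel x y h => obtain ⟨l, r, a, b⟩ := h; simp
  | refl x => rfl
  | symm x y _ ih => exact ih.symm
  | trans x y z _ _ ih1 ih2 => exact ih1.trans ih2

-- pair commutes past an element
theorem LE'.pair (a x : ℤ) (r : List ℤ) : LE' (a :: a :: x :: r) (x :: a :: a :: r) := by
  have h1 := (LE'.head' a x r).cons a
  have h2 := LE'.head' a (2 * a - x) (a :: r)
  rw [show 2 * a - (2 * a - x) = x by ring] at h2
  exact h1.trans h2

theorem LE'.pair_refl (a x : ℤ) (r : List ℤ) :
    LE' (a :: a :: x :: r) (x :: (2 * x - a) :: (2 * x - a) :: r) :=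
  ((LE'.head a x r).cons a).trans (LE'.head a x _)

theorem triple_s4 (N : ℕ) : ∀ (x y z : ℤ) (r : List ℤ), (y - x).natAbs + (z - y).natAbs ≤ N →
    ∃ a c, LE' (x :: y :: z :: r) (a :: a :: c :: r) := by
  induction N with
  | zero =>
    intro x y z r h
    obtain rfl : y = x := by omega
    exact ⟨y, z, LE'.refl _⟩
  | succ N ih =>
    intro x y z r h
    by_cases h1 : y = x
    · subst h1; exact ⟨y, z, LE'.refl _⟩
    by_cases h2 : z = y
    · subst h2; exact ⟨z, x, (LE'.pair z x r).symm⟩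
    by_cases h3 : (y - x).natAbs ≤ (z - y).natAbs
    · by_cases h4 : (0 < y - x ↔ 0 < z - y)
      · obtain ⟨a, c, h⟩ := ih y (2 * y - x) z r (by omega)
        exact ⟨a, c, (LE'.head x y _).trans h⟩
      · obtain ⟨a, c, h⟩ := ih (2 * x - y) x z r (by omega)
        exact ⟨a, c, (LE'.head' x y _).trans h⟩
    · by_cases h4 : (0 < y - x ↔ 0 < z - y)
      · obtain ⟨a, c, h⟩ := ih x (2 * y - z) y r (by omega)
        exact ⟨a, c, ((LE'.head' y z _).cons x).trans h⟩
      · obtain ⟨a, c, h⟩ := ih x z (2 * z - y) r (by omega)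
        exact ⟨a, c, ((LE'.head y z _).cons x).trans h⟩

def dbl : List ℤ → List ℤ
  | [] => []
  | a :: l => a :: a :: dbl l

theorem to_dbl (n : ℕ) : ∀ l : List ℤ, l.length = 2 * n → las l = 0 → ∃ p, LE' l (dbl p) := by
  induction n with
  | zero =>
    intro l h _
    obtain rfl : l = [] := List.length_eq_zero_iff.mp (by omega)
    exact ⟨[], LE'.refl _⟩
  | succ n ih =>
    intro l hl h0
    match l, hl, h0 with
    | [x, y], hl, h0 =>
      simp only [las] at h0
      obtain rfl : x = y := by omega
      exact ⟨[x], LE'.refl _⟩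
    | x :: y :: z :: r, hl, h0 =>
      obtain ⟨a, c, h⟩ := triple_s4 _ x y z r le_rfl
      have hlas := h.las_eq
      simp only [List.length_cons] at hl
      obtain ⟨p, hp⟩ := ih (c :: r) (by simp only [List.length_cons]; omega) (by
        rw [h0] at hlas; simp only [las] at hlas ⊢; omega)
      exact ⟨a :: p, h.trans ((hp.cons a).cons a)⟩

def PE (p q : List ℤ) : Prop := LE' (dbl p) (dbl q)

theorem PE.trans {p q r : List ℤ} (h : PE p q) (h' : PE q r) : PE p r := LE'.trans h h'
theorem PE.cons {p q : List ℤ} (c : ℤ) (h : PE p q) : PE (c :: p) (c :: q) :=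
  (LE'.cons c h).cons c

theorem PE.perm {p q : List ℤ} (h : p.Perm q) : PE p q := by
  induction h with
  | nil => exact LE'.refl _
  | cons x _ ih => exact ih.cons x
  | swap x y l =>
    exact (LE'.pair y x _).trans ((LE'.pair y x _).cons x)
  | trans _ _ h1 h2 => exact h1.trans h2

theorem PE.reflect (a b : ℤ) (l : List ℤ) : PE (a :: b :: l) ((2 * b - a) :: b :: l) := by
  have h1 : LE' (dbl (a :: b :: l)) (dbl (b :: (2 * b - a) :: l)) :=
    (LE'.pair_refl a b _).trans ((LE'.pair (2 * b - a) b _).cons b)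
  exact PE.trans h1 (PE.perm (List.Perm.swap _ _ _))

theorem PE.block (k : ℕ) (a b : ℤ) (l : List ℤ) :
    PE (List.replicate k a ++ b :: l) (List.replicate k (2 * b - a) ++ b :: l) := by
  induction k with
  | zero => exact LE'.refl _
  | succ k ih =>
    have h1 := ih.cons a
    have h2 : PE (a :: (List.replicate k (2 * b - a) ++ b :: l))
        (a :: b :: (List.replicate k (2 * b - a) ++ l)) :=
      PE.perm (List.Perm.cons _ List.perm_middle)
    have h3 := PE.reflect a b (List.replicate k (2 * b - a) ++ l)
    have h4 : PE ((2 * b - a) :: b :: (List.replicate k (2 * b - a) ++ l))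
        ((2 * b - a) :: (List.replicate k (2 * b - a) ++ b :: l)) :=
      PE.perm (List.Perm.cons _ List.perm_middle.symm)
    exact ((h1.trans h2).trans h3).trans h4

def Good (p : List ℤ) : Prop :=
  ∃ (a b : ℤ) (r s : ℕ), PE p (List.replicate r a ++ List.replicate s b)

theorem Good.of {p q : List ℤ} (h : PE p q) (hq : Good q) : Good p := by
  obtain ⟨a, b, r, s, h'⟩ := hq
  exact ⟨a, b, r, s, h.trans h'⟩

def R3 (i j k : ℕ) (x y z : ℤ) : List ℤ :=
  List.replicate i x ++ (List.replicate j y ++ List.replicate k z)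

theorem R3.perm1 (i j k : ℕ) (x y z : ℤ) : (R3 i j k x y z).Perm (R3 j i k y x z) := by
  rw [List.perm_iff_count]; intro a; simp only [R3, List.count_append]; omega

theorem R3.perm2 (i j k : ℕ) (x y z : ℤ) : (R3 i j k x y z).Perm (R3 i k j x z y) := by
  rw [List.perm_iff_count]; intro a; simp only [R3, List.count_append]; omega

theorem three (N : ℕ) : ∀ (i j k : ℕ) (x y z : ℤ), x ≤ y → y ≤ z → z - x ≤ N →
    Good (R3 i j k x y z) := by
  induction N with
  | zero =>
    intro i j k x y z h1 h2 h3
    obtain rfl : x = y := by omega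
    refine ⟨x, z, i + j, k, PE.perm ?_⟩
    rw [R3, List.replicate_add, List.append_assoc]
  | succ N ih =>
    intro i j k x y z h1 h2 h3
    by_cases e1 : x = y
    · subst e1
      refine ⟨x, z, i + j, k, PE.perm ?_⟩
      rw [R3, List.replicate_add, List.append_assoc]
    by_cases e2 : y = z
    · subst e2
      refine ⟨x, y, i, j + k, PE.perm ?_⟩
      rw [R3, List.replicate_add]
    cases j with
    | zero =>
      refine ⟨x, z, i, k, PE.perm ?_⟩
      simp [R3]
    | succ j =>
      by_cases h : y - x ≤ z - y
      · have hb : PE (R3 i (j+1) k x y z) (R3 i (j+1) k (2*y-x) y z) :=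
          PE.block i x y (List.replicate j y ++ List.replicate k z)
        refine Good.of (hb.trans (PE.perm (R3.perm1 _ _ _ _ _ _))) (ih _ _ _ _ _ _ ?_ ?_ ?_) <;>
          omega
      · have hb : PE (R3 k (j+1) i z y x) (R3 k (j+1) i (2*y-z) y x) :=
          PE.block k z y (List.replicate j y ++ List.replicate i x)
        have p1 : (R3 i (j+1) k x y z).Perm (R3 k (j+1) i z y x) :=
          ((R3.perm1 _ _ _ _ _ _).trans (R3.perm2 _ _ _ _ _ _)).trans (R3.perm1 _ _ _ _ _ _)
        have p2 : (R3 k (j+1) i (2*y-z) y x).Perm (R3 i k (j+1) x (2*y-z) y) :=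
          (R3.perm2 _ _ _ _ _ _).trans (R3.perm1 _ _ _ _ _ _)
        refine Good.of (((PE.perm p1).trans hb).trans (PE.perm p2)) (ih _ _ _ _ _ _ ?_ ?_ ?_) <;>
          omega

theorem three' (i j k : ℕ) (x y z : ℤ) : Good (R3 i j k x y z) := by
  have key : ∀ (i j k : ℕ) (x y z : ℤ), x ≤ y → y ≤ z → Good (R3 i j k x y z) :=
    fun i j k x y z h1 h2 => three (z - x).toNat i j k x y z h1 h2 (by omega)
  have P1 := fun i j k x y z => PE.perm (R3.perm1 i j k x y z)
  have P2 := fun i j k x y z => PE.perm (R3.perm2 i j k x y z)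
  have key2 : ∀ (i j k : ℕ) (x y z : ℤ), x ≤ y → Good (R3 i j k x y z) := by
    intro i j k x y z h
    by_cases h1 : y ≤ z
    · exact key _ _ _ _ _ _ h h1
    by_cases h2 : x ≤ z
    · exact Good.of (P2 _ _ _ _ _ _) (key _ _ _ _ _ _ h2 (by omega))
    · exact Good.of ((P2 _ _ _ _ _ _).trans (P1 _ _ _ _ _ _)) (key _ _ _ _ _ _ (by omega) h)
  by_cases h : x ≤ y
  · exact key2 _ _ _ _ _ _ h
  · exact Good.of (P1 _ _ _ _ _ _) (key2 _ _ _ _ _ _ (by omega))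

theorem all_good (p : List ℤ) : Good p := by
  induction p with
  | nil => exact ⟨0, 0, 0, 0, LE'.refl _⟩
  | cons c p ih =>
    obtain ⟨a, b, r, s, h⟩ := ih
    exact Good.of (h.cons c) (three' 1 r s c a b)

theorem dbl_append (p q : List ℤ) : dbl (p ++ q) = dbl p ++ dbl q := by
  induction p with
  | nil => rfl
  | cons a p ih => simp [dbl, ih]

theorem dbl_replicate (k : ℕ) (a : ℤ) : dbl (List.replicate k a) = List.replicate (2 * k) a := by
  induction k with
  | zero => rfl
  | succ k ih => rw [show 2 * (k + 1) = 2 * k + 1 + 1 by ring]; simp [List.replicate_succ, dbl, ih]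

def toF (n : ℕ) (l : List ℤ) : Fin n → ℤ := fun i => l.getD i 0

theorem HurwitzEquiv.symm' {n : ℕ} {v w : Fin n → ℤ} (h : HurwitzEquiv v w) :
    HurwitzEquiv w v := by
  induction h with
  | refl => exact Relation.ReflTransGen.refl
  | tail _ h ih => exact Relation.ReflTransGen.head h.symm ih

theorem LE'.toF {n : ℕ} {p q : List ℤ} (h : LE' p q) (hn : p.length = n) :
    HurwitzEquiv (toF n p) (toF n q) := by
  induction h with
  | rel x y h =>
    obtain ⟨l, r, a, b⟩ := h
    refine Relation.ReflTransGen.single (Or.inl ⟨l.length, ?_, ?_, ?_, ?_⟩)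
    · rw [← hn]; simp
    · simp [_root_.toF]
    · simp [_root_.toF]
    · intro j h1 h2
      simp only [_root_.toF, List.getD_eq_getElem?_getD]
      rcases lt_or_ge (j : ℕ) l.length with h | h
      · simp [List.getElem?_append_left h]
      · obtain ⟨t, ht⟩ : ∃ t, (j : ℕ) = l.length + (t + 2) := ⟨j - l.length - 2, by omega⟩
        rw [ht]
        simp [List.getElem?_append_right]
  | refl x => exact Relation.ReflTransGen.refl
  | symm x y h ih => exact (ih ((LE'.length_eq h).trans hn)).symm'
  | trans x y z h1 _ ih1 ih2 =>
    exact Relation.ReflTransGen.trans (ih1 hn) (ih2 ((LE'.length_eq h1).symm.trans hn))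

theorem altSum_las {n : ℕ} (v : Fin n → ℤ) : altSum v = las (List.ofFn v) := by
  induction n with
  | zero => simp [altSum, las]
  | succ n ih =>
    rw [List.ofFn_succ, las, ← ih, altSum, altSum, Fin.sum_univ_succ, sub_eq_add_neg,
      ← Finset.sum_neg_distrib]
    simp [pow_succ]

theorem altSum_move {n : ℕ} {v w : Fin n → ℤ} (h : IsHurwitzMove v w) : altSum v = altSum w := by
  obtain ⟨i, hi, h1, h2, h3⟩ := h
  rw [← sub_eq_zero, altSum, altSum, ← Finset.sum_sub_distrib]
  rw [← Finset.sum_subset (Finset.subset_univ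
    ({⟨i, Nat.lt_of_succ_lt hi⟩, ⟨i + 1, hi⟩} : Finset (Fin n)))]
  · rw [Finset.sum_pair (by simp), h1, h2]
    simp only [pow_succ]; ring
  · intro j _ hj
    simp only [Finset.mem_insert, Finset.mem_singleton, not_or, Fin.ext_iff] at hj
    rw [h3 j hj.1 hj.2, sub_self]

theorem altSum_equiv {n : ℕ} {v w : Fin n → ℤ} (h : HurwitzEquiv v w) : altSum v = altSum w := by
  induction h with
  | refl => rfl
  | tail _ h ih =>
    rcases h with h | h
    · exact ih.trans (altSum_move h)
    · exact ih.trans (altSum_move h).symm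

theorem altSum_target (m r : ℕ) (a b : ℤ) :
    altSum (fun j : Fin (2 * m) => if (j : ℕ) < 2 * r then a else b) = 0 := by
  rw [altSum, Fin.sum_univ_eq_sum_range (fun j => (-1 : ℤ) ^ j * if j < 2 * r then a else b)]
  induction m with
  | zero => simp
  | succ m ih =>
    rw [show 2 * (m + 1) = 2 * m + 1 + 1 by ring, Finset.sum_range_succ, Finset.sum_range_succ, ih]
    have : (2 * m < 2 * r) ↔ (2 * m + 1 < 2 * r) := by omega
    simp only [this, pow_succ]; ring

theorem stmt_4 (m : ℕ) (hm : 1 ≤ m) (v : Fin (2 * m) → ℤ) :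
    altSum v = 0 ↔
      ∃ (a b : ℤ) (r s : ℕ), r + s = m ∧
        HurwitzEquiv v (fun j => if (j : ℕ) < 2 * r then a else b) := by
  constructor
  · intro h
    obtain ⟨p, hp⟩ := to_dbl m (List.ofFn v) (by simp) (by rw [← altSum_las, h])
    obtain ⟨a, b, r, s, hq⟩ := all_good p
    have hh := hp.trans hq
    rw [dbl_append, dbl_replicate, dbl_replicate] at hh
    have hl := hh.length_eq
    simp only [List.length_ofFn, List.length_append, List.length_replicate] at hl
    refine ⟨a, b, r, s, by omega, ?_⟩
    have hF := hh.toF (n := 2 * m) (by simp)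
    convert hF using 1
    · funext j; simp [toF]
    · funext j
      have := j.2
      simp only [toF, List.getD_eq_getElem?_getD]
      split_ifs with hj
      · rw [List.getElem?_append_left (by simpa using hj)]; simp [hj]
      · rw [List.getElem?_append_right (by simpa using hj)]
        simp only [List.length_replicate]
        rw [List.getElem?_replicate_of_lt (by omega)]; rfl
  · rintro ⟨a, b, r, s, -, h⟩
    rw [altSum_equiv h, altSum_target]
end

section
/- Let m ≥ 1 and let v, w ∈ ℤ^{2m} be nontrivial vectors. Then v and w are Hurwitz equivalent if and only if Δ(v) = Δ(w), d(v) = d(w), and M(v) = M(w). -/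
namespace Hz

inductive H : List ℤ → List ℤ → Prop
  | refl (l) : H l l
  | symm {l l'} : H l l' → H l' l
  | trans {l l' l''} : H l l' → H l' l'' → H l l''
  | move (l₁ : List ℤ) (a b : ℤ) (l₂ : List ℤ) :
      H (l₁ ++ a :: b :: l₂) (l₁ ++ b :: (2 * b - a) :: l₂)

instance : Trans H H H := ⟨H.trans⟩

theorem H.of_eq {l l' : List ℤ} (h : l = l') : H l l' := h ▸ H.refl l

theorem H.append_left {l l' : List ℤ} (h : H l l') (t : List ℤ) : H (t ++ l) (t ++ l') := by
  induction h with
  | refl l => exact H.refl _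
  | symm _ ih => exact ih.symm
  | trans _ _ h1 h2 => exact h1.trans h2
  | move l₁ a b l₂ => simpa using H.move (t ++ l₁) a b l₂

theorem H.append_right {l l' : List ℤ} (h : H l l') (t : List ℤ) : H (l ++ t) (l' ++ t) := by
  induction h with
  | refl l => exact H.refl _
  | symm _ ih => exact ih.symm
  | trans _ _ h1 h2 => exact h1.trans h2
  | move l₁ a b l₂ => simpa using H.move l₁ a b (l₂ ++ t)

theorem H.cons {l l' : List ℤ} (h : H l l') (a : ℤ) : H (a :: l) (a :: l') := by
  simpa using h.append_left [a]

theorem H.length_eq {l l' : List ℤ} (h : H l l') : l.length = l'.length := by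
  induction h with
  | refl l => rfl
  | symm _ ih => exact ih.symm
  | trans _ _ h1 h2 => exact h1.trans h2
  | move l₁ a b l₂ => simp

theorem H.altSum_eq {l l' : List ℤ} (h : H l l') : l.alternatingSum = l'.alternatingSum := by
  induction h with
  | refl l => rfl
  | symm _ ih => exact ih.symm
  | trans _ _ h1 h2 => exact h1.trans h2
  | move l₁ a b l₂ =>
    rw [List.alternatingSum_append, List.alternatingSum_append]
    congr 2
    simp [List.alternatingSum_cons]
    ring

/-- all entries congruent mod k -/
def cong (l : List ℤ) (k : ℤ) : Prop := ∀ x ∈ l, ∀ y ∈ l, k ∣ x - y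

theorem cong_iff {l : List ℤ} {k c : ℤ} (hc : c ∈ l) : cong l k ↔ ∀ x ∈ l, k ∣ x - c := by
  constructor
  · intro h x hx; exact h x hx c hc
  · intro h x hx y hy
    have := dvd_sub (h x hx) (h y hy)
    simpa using this

theorem H.inv {l l' : List ℤ} (h : H l l') (k : ℤ) :
    (cong l k ↔ cong l' k) ∧
    (cong l k → (l.map (fun x => x % (2 * k))).Perm (l'.map (fun x => x % (2 * k)))) := by
  induction h with
  | refl l => exact ⟨Iff.rfl, fun _ => List.Perm.refl _⟩
  | symm _ ih => exact ⟨ih.1.symm, fun h => (ih.2 (ih.1.2 h)).symm⟩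
  | trans _ _ h1 h2 => exact ⟨h1.1.trans h2.1, fun h => (h1.2 h).trans (h2.2 (h1.1.1 h))⟩
  | move l₁ a b l₂ =>
    constructor
    · rw [cong_iff (c := b) (by simp), cong_iff (c := b) (by simp)]
      have e : (k ∣ 2 * b - a - b) ↔ (k ∣ a - b) := by
        rw [show 2 * b - a - b = -(a - b) by ring, dvd_neg]
      constructor
      · intro h x hx
        simp only [List.mem_append, List.mem_cons] at hx h
        rcases hx with hx | rfl | rfl | hx
        · exact h _ (by tauto)
        · simp
        · exact e.2 (h a (by tauto))
        · exact h _ (by tauto)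
      · intro h x hx
        simp only [List.mem_append, List.mem_cons] at hx h
        rcases hx with hx | rfl | rfl | hx
        · exact h _ (by tauto)
        · exact e.1 (h _ (by tauto))
        · simp
        · exact h _ (by tauto)
    · intro h
      have e : (2 * b - a) % (2 * k) = a % (2 * k) := by
        obtain ⟨c, hc⟩ := h b (by simp) a (by simp)
        apply Int.emod_eq_emod_iff_emod_sub_eq_zero.2
        apply Int.emod_eq_zero_of_dvd
        exact ⟨c, by linear_combination 2 * hc⟩
      simp only [List.map_append, List.map_cons, e]
      exact (List.Perm.swap _ _ _).append_left _

/-! translation -/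

theorem sig (a b : ℤ) (l : List ℤ) : H (a :: b :: l) (b :: (2 * b - a) :: l) := by
  simpa using H.move [] a b l

theorem sig' (a b : ℤ) (l : List ℤ) : H (a :: b :: l) ((2 * a - b) :: a :: l) := by
  have := (sig (2 * a - b) a l).symm
  simpa using this

theorem trl (p D : ℤ) (l : List ℤ) (k : ℤ) :
    H (p :: (p - D) :: l) ((p + k * D) :: (p + k * D - D) :: l) := by
  induction k using Int.induction_on with
  | zero => simpa using H.refl _
  | succ i ih =>
    refine ih.trans ((sig' _ _ _).trans (H.of_eq ?_))
    congr 1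
    · ring
    · congr 1; ring
  | pred i ih =>
    refine ih.trans ((sig _ _ _).trans (H.of_eq ?_))
    congr 1
    · ring
    · congr 1; ring

/-! triples -/

def T (D s t : ℤ) : List ℤ := [D - t, D - t + s, D + s]

theorem T1 (D s t : ℤ) (k : ℤ) : H (T D s t) (T D s (t + k * s)) := by
  have := trl (D - t) (-s) [D + s] k
  unfold T
  convert this using 2
  · ring
  · ring_nf
  · congr 1; ring

theorem T2 (D s t : ℤ) (k : ℤ) : H (T D s t) (T D (s + k * t) t) := by
  have := (trl (D - t + s) (-t) [] (-k)).cons (D - t)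
  unfold T
  convert this using 2
  · ring_nf
  · congr 1
    · ring
    · ring_nf

theorem Trot (D s t : ℤ) : H (T D s t) (T D t (-s)) := by
  have h1 := T1 D s t (-1)
  have h2 := T2 D s (t + (-1) * s) 1
  have h3 := T1 D (s + 1 * (t + (-1) * s)) (t + (-1) * s) (-1)
  refine (h1.trans (h2.trans h3)).trans (H.of_eq ?_)
  congr 1 <;> ring

theorem Tred (n : ℕ) : ∀ (D s t : ℤ), s.natAbs ≤ n →
    H (T D s t) (T D 0 (Int.gcd s t)) := by
  induction n with
  | zero =>
    intro D s t hs
    have : s = 0 := by omega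
    subst this
    simp only [Int.gcd_zero_left]
    rcases Int.natAbs_eq t with h | h
    · rw [← h]; exact H.refl _
    · have : (t.natAbs : ℤ) = - t := by omega
      rw [this]
      exact (Trot D 0 t).trans ((H.of_eq (by simp)).trans (Trot D t 0 |>.trans (H.of_eq (by simp))))
  | succ n ih =>
    intro D s t hs
    by_cases h0 : s = 0
    · exact ih D s t (by omega)
    · have h1 := T1 D s t (-(t / s))
      have e : t + -(t / s) * s = t % s := by
        rw [Int.emod_def]; ring
      rw [e] at h1
      have h2 := Trot D s (t % s)
      have h3 := ih D (t % s) (-s) (by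
        have := Int.emod_nonneg t h0
        have := Int.emod_lt_abs t h0
        rw [Int.abs_eq_natAbs] at this
        omega)
      have e2 : Int.gcd (t % s) (-s) = Int.gcd s t := by
        rw [Int.gcd_neg, Int.gcd_emod, Int.gcd_comm]
      rw [e2] at h3
      exact h1.trans (h2.trans h3)

theorem triple (a b c : ℤ) : ∃ y, y = (a - b + c) - Int.gcd (b - a) (c - b) ∧
    H [a, b, c] [y, y, a - b + c] := by
  refine ⟨_, rfl, ?_⟩
  have := Tred _ (a - b + c) (b - a) (c - b) le_rfl
  unfold T at this
  convert this using 2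
  · ring
  · congr 1
    · ring
    · ring_nf
  · simp

/-! pairs -/

theorem pcomm1 (x a : ℤ) (l : List ℤ) : H (x :: a :: a :: l) (a :: a :: x :: l) := by
  refine (sig x a _).trans (((sig (2 * a - x) a l).cons a).trans (H.of_eq ?_))
  simp

theorem prefl1 (x a : ℤ) (l : List ℤ) :
    H (x :: a :: a :: l) (x :: (2 * x - a) :: (2 * x - a) :: l) := by
  refine (sig' x a _).trans (((sig' x a l).cons _).trans ?_)
  exact (pcomm1 x (2 * x - a) l).symm

theorem pcomm (a : ℤ) (l t : List ℤ) : H (l ++ a :: a :: t) (a :: a :: (l ++ t)) := by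
  induction l with
  | nil => exact H.refl _
  | cons x l ih => exact (ih.cons x).trans (pcomm1 x a _)

def D (xs : List ℤ) : List ℤ := xs.flatMap (fun x => [x, x])

@[simp] theorem D_nil : D [] = [] := rfl
@[simp] theorem D_cons (x : ℤ) (xs) : D (x :: xs) = x :: x :: D xs := rfl

theorem D_perm {xs ys : List ℤ} (h : xs.Perm ys) : H (D xs) (D ys) := by
  induction h with
  | nil => exact H.refl _
  | cons x _ ih => exact (ih.cons x).cons x
  | swap x y l => exact pcomm x [y, y] (D l)
  | trans _ _ h1 h2 => exact h1.trans h2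

theorem mem_D {x : ℤ} {xs : List ℤ} : x ∈ D xs ↔ x ∈ xs := by
  simp [D]

theorem toPairs (m : ℕ) : ∀ l : List ℤ, l.length = 2 * m + 2 →
    ∃ p q xs, H l (p :: q :: D xs) ∧ xs.length = m := by
  induction m with
  | zero =>
    intro l hl
    match l, hl with
    | [a, b], _ => exact ⟨a, b, [], H.refl _, rfl⟩
  | succ m ih =>
    intro l hl
    match l, hl with
    | a :: b :: c :: r, hl =>
      obtain ⟨y, -, h⟩ := triple a b c
      have h := h.append_right r
      obtain ⟨p, q, xs, h2, hx⟩ := ih ((a - b + c) :: r) (by simp at hl ⊢; omega)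
      refine ⟨p, q, y :: xs, ?_, by simp [hx]⟩
      refine h.trans (((h2.cons y).cons y).trans ?_)
      exact (pcomm y [p, q] (D xs)).symm

/-! states -/

def S (δ p : ℤ) (xs : List ℤ) : List ℤ := p :: (p - δ) :: D xs

theorem S_perm {δ p : ℤ} {xs ys : List ℤ} (h : xs.Perm ys) : H (S δ p xs) (S δ p ys) :=
  ((D_perm h).cons _).cons _

theorem S_shift (δ p : ℤ) (xs : List ℤ) (k : ℤ) : H (S δ p xs) (S δ (p + k * δ) xs) :=
  trl p δ (D xs) k

theorem prefl2 (p q x : ℤ) (l : List ℤ) :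
    H (p :: q :: x :: x :: l) (p :: q :: (2 * p - x) :: (2 * p - x) :: l) :=
  ((pcomm1 q x l).cons p).trans
    ((prefl1 p x (q :: l)).trans ((pcomm1 q (2 * p - x) l).symm.cons p))

/-- reflect the first pair in `p`. -/
theorem S_refl_p (δ p x : ℤ) (xs : List ℤ) : H (S δ p (x :: xs)) (S δ p ((2 * p - x) :: xs)) :=
  prefl2 p (p - δ) x (D xs)

/-- reflect a pair in another pair -/
theorem S_refl_z (δ p x z : ℤ) (xs : List ℤ) :
    H (S δ p (z :: x :: xs)) (S δ p (z :: (2 * z - x) :: xs)) :=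
  ((prefl2 z z x (D xs)).cons _).cons _

theorem S_refl_mem {δ p x z : ℤ} {xs : List ℤ} (hz : z ∈ p :: xs) :
    H (S δ p (x :: xs)) (S δ p ((2 * z - x) :: xs)) := by
  rcases List.mem_cons.1 hz with rfl | hz
  · exact S_refl_p _ _ _ _
  · have hp := List.perm_cons_erase hz
    have h1 : ∀ y : ℤ, H (S δ p (y :: xs)) (S δ p (z :: y :: xs.erase z)) := fun y =>
      S_perm ((hp.cons y).trans (List.Perm.swap _ _ _))
    exact (h1 x).trans ((S_refl_z δ p x z _).trans (h1 _).symm)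

theorem S_trans_mem {δ p x z z' : ℤ} {xs : List ℤ} (hz : z ∈ p :: xs) (hz' : z' ∈ p :: xs)
    (k : ℤ) : H (S δ p (x :: xs)) (S δ p ((x + 2 * k * (z' - z)) :: xs)) := by
  induction k using Int.induction_on with
  | zero => simpa using H.refl _
  | succ i ih =>
    refine ih.trans ((S_refl_mem hz).trans ((S_refl_mem hz').trans (H.of_eq ?_)))
    congr 2; ring
  | pred i ih =>
    refine ih.trans ((S_refl_mem hz').trans ((S_refl_mem hz).trans (H.of_eq ?_)))
    congr 2; ring

theorem S_put {δ p g x : ℤ} {xs : List ℤ} (hg : 0 < g) (hm : p + g ∈ xs) :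
    ∃ x', p ≤ x' ∧ x' ≤ p + g ∧ H (S δ p (x :: xs)) (S δ p (x' :: xs)) := by
  have hp : p ∈ p :: xs := by simp
  have hq : p + g ∈ p :: xs := by simp [hm]
  have h1 := S_trans_mem (δ := δ) (x := x) hp hq (-((x - p) / (2 * g)))
  have e := Int.emod_add_mul_ediv (x - p) (2 * g)
  have e1 := Int.emod_nonneg (x - p) (b := 2 * g) (by omega)
  have e2 := Int.emod_lt_of_pos (x - p) (b := 2 * g) (by omega)
  have e3 : x + 2 * -((x - p) / (2 * g)) * (p + g - p) = p + (x - p) % (2 * g) := by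
    linear_combination -e
  rw [e3] at h1
  by_cases hh : (x - p) % (2 * g) ≤ g
  · exact ⟨_, by omega, by omega, h1⟩
  · refine ⟨_, ?_, ?_, h1.trans (S_refl_mem hq)⟩ <;> omega

theorem S_settle {δ p g : ℤ} (hg : 0 < g) (xs : List ℤ) : ∀ ys : List ℤ, p + g ∈ ys →
    ∃ xs', xs'.length = xs.length ∧ (∀ x ∈ xs', p ≤ x ∧ x ≤ p + g) ∧
      H (S δ p (xs ++ ys)) (S δ p (xs' ++ ys)) := by
  induction xs with
  | nil => intro ys _; exact ⟨[], rfl, by simp, H.refl _⟩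
  | cons x xs ih =>
    intro ys hy
    obtain ⟨x', h1, h2, h3⟩ := S_put (δ := δ) (p := p) (x := x) (xs := xs ++ ys) hg (by simp [hy])
    obtain ⟨xs', h4, h5, h6⟩ := ih (x' :: ys) (by simp [hy])
    refine ⟨x' :: xs', by simp [h4], ?_, ?_⟩
    · intro y hy
      rcases List.mem_cons.1 hy with rfl | hy
      · exact ⟨h1, h2⟩
      · exact h5 y hy
    · refine h3.trans ((S_perm ?_).trans (h6.trans (S_perm ?_)))
      · exact List.perm_middle.symm
      · exact List.perm_middle

theorem S_settle' {δ p g : ℤ} (hg : 0 < g) (xs : List ℤ) :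
    ∃ xs', (∀ x ∈ xs', p ≤ x ∧ x ≤ p + g) ∧
      H (S δ p ((p + g) :: xs)) (S δ p ((p + g) :: xs')) := by
  obtain ⟨xs', -, h1, h2⟩ := S_settle (δ := δ) (p := p) hg xs [p + g] (by simp)
  refine ⟨xs', h1, (S_perm ?_).trans (h2.trans (S_perm ?_))⟩
  · exact (List.perm_append_singleton _ _).symm
  · exact List.perm_append_singleton _ _

/-- the key move -/
theorem S_key (δ p x : ℤ) (xs : List ℤ) :
    H (S δ p (x :: xs)) (S δ (x + δ) ((x + δ - Int.gcd δ (x - p)) :: xs)) := by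
  obtain ⟨y, hy, h⟩ := triple p (p - δ) x
  have h := h.append_right (x :: D xs)
  have e : Int.gcd (p - δ - p) (x - (p - δ)) = Int.gcd δ (x - p) := by
    rw [show p - δ - p = -δ by ring, show x - (p - δ) = x - p + δ by ring, Int.neg_gcd]
    simp
  rw [e, show p - (p - δ) + x = x + δ by ring] at hy
  rw [show p - (p - δ) + x = x + δ by ring] at h
  subst hy
  refine h.trans ((pcomm _ [x + δ, x] (D xs)).symm.trans (H.of_eq ?_))
  simp [S]

theorem S_key_pos (δ p x : ℤ) (xs : List ℤ) :
    H (S δ p (x :: xs)) (S δ (x + δ) ((x + δ + Int.gcd δ (x - p)) :: xs)) := by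
  refine (S_key δ p x xs).trans ((S_refl_p _ _ _ _).trans (H.of_eq ?_))
  congr 2; ring

theorem S_up {δ g : ℤ} (hg : 0 < g) (hd : g ∣ δ) (p : ℤ) (xs : List ℤ) :
    H (S δ p ((p + g) :: xs)) (S δ (p + δ + g) ((p + δ + g + g) :: xs)) := by
  refine (S_key_pos δ p (p + g) xs).trans (H.of_eq ?_)
  have : (Int.gcd δ (p + g - p) : ℤ) = g := by
    rw [show p + g - p = g by ring, Int.gcd_eq_right hg.le hd]
  rw [this]
  congr 1
  · ring
  · congr 1; ring

theorem S_dn {δ g : ℤ} (hg : 0 < g) (hd : g ∣ δ) (p : ℤ) (xs : List ℤ) :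
    H (S δ p ((p + g) :: xs)) (S δ (p + δ - g) ((p + δ - g + g) :: xs)) := by
  refine (S_refl_p _ _ _ _).trans ((S_key_pos δ p (2 * p - (p + g)) xs).trans (H.of_eq ?_))
  have : (Int.gcd δ (2 * p - (p + g) - p) : ℤ) = g := by
    rw [show 2 * p - (p + g) - p = -g by ring, Int.gcd_neg, Int.gcd_eq_right hg.le hd]
  rw [this]
  congr 1
  · ring
  · congr 1; ring

theorem S_two {δ g : ℤ} (hg : 0 < g) (hd : g ∣ δ) (p : ℤ) (xs : List ℤ) :
    H (S δ p ((p + g) :: xs)) (S δ (p + 2 * g) ((p + 2 * g + g) :: xs)) := by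
  have h1 := S_up hg hd p xs
  have h2 := S_dn hg hd (p + 2 * g) xs
  rw [show p + 2 * g + δ - g = p + δ + g by ring] at h2
  exact h1.trans h2.symm

theorem S_even {δ g : ℤ} (hg : 0 < g) (hd : g ∣ δ) (p : ℤ) (xs : List ℤ) (k : ℤ) :
    H (S δ p ((p + g) :: xs)) (S δ (p + 2 * k * g) ((p + 2 * k * g + g) :: xs)) := by
  induction k using Int.induction_on with
  | zero => simpa using H.refl _
  | succ i ih =>
    refine ih.trans ((S_two hg hd _ _).trans (H.of_eq ?_))
    congr 1
    · ring
    · congr 1; ring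
  | pred i ih =>
    refine ih.trans (H.symm ((H.of_eq ?_).trans ((S_two hg hd (p + 2 * (-(i : ℤ) - 1) * g) xs).trans
      (H.of_eq ?_))))
    · rfl
    · congr 1
      · ring
      · congr 1; ring

/-- even quotient: shift by g -/
theorem S_odd1 {δ g k : ℤ} (hg : 0 < g) (hd : δ = 2 * k * g) (p : ℤ) (xs : List ℤ) :
    H (S δ p ((p + g) :: xs)) (S δ (p + g) ((p + g + g) :: xs)) := by
  have hdv : g ∣ δ := ⟨2 * k, by rw [hd]; ring⟩
  have h1 := S_up hg hdv p xs
  have h2 := S_even hg hdv (p + g) xs k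
  rw [show p + g + 2 * k * g = p + δ + g by rw [hd]; ring] at h2
  exact h1.trans h2.symm

/-- odd quotient, both kinds of pairs: shift by g -/
theorem S_odd2 {δ g k : ℤ} (hg : 0 < g) (hd : δ = (2 * k + 1) * g) (p : ℤ) (xs : List ℤ)
    (hp : p ∈ xs) :
    ∃ ys, H (S δ p ((p + g) :: xs)) (S δ (p + g) ((p + g + g) :: ys)) := by
  have hdv : g ∣ δ := ⟨2 * k + 1, by rw [hd]; ring⟩
  refine ⟨(p + g) :: xs.erase p, ?_⟩
  have e : ((p + g) :: xs).Perm (p :: (p + g) :: xs.erase p) :=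
    ((List.perm_cons_erase hp).cons _).trans (List.Perm.swap _ _ _)
  refine (S_perm e).trans ?_
  have h0 := S_trans_mem (δ := δ) (x := p) (z := p) (z' := p + g) (p := p)
    (xs := (p + g) :: xs.erase p) (by simp) (by simp) (k + 1)
  have h1 := S_shift δ p ((p + 2 * (k + 1) * (p + g - p)) :: (p + g) :: xs.erase p) 1
  have h2 := S_even hg hdv (p + g) ((p + g) :: xs.erase p) k
  refine h0.trans (h1.trans (H.symm (h2.trans (H.of_eq ?_))))
  rw [hd]
  congr 1
  · ring
  · congr 1; ring

theorem exists_norm {l : List ℤ} {δ d : ℤ} (hd : 0 < d) (hc : cong l d)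
    (hm : ∀ k, cong l k → k ∣ d) {p₀ x₀ : ℤ} {xs₀ : List ℤ}
    (h₀ : H l (S δ p₀ (x₀ :: xs₀))) :
    ∃ p xs, H l (S δ p ((p + d) :: xs)) := by
  have hex : ∃ g : ℕ, 0 < g ∧ ∃ p x xs, H l (S δ p (x :: xs)) ∧ Int.gcd δ (x - p) = g := by
    by_contra hcon
    have key : ∀ p x xs, H l (S δ p (x :: xs)) → δ = 0 ∧ x = p := by
      intro p x xs h
      by_contra hne
      apply hcon
      refine ⟨_, ?_, p, x, xs, h, rfl⟩
      rw [Int.gcd_pos_iff]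
      by_contra h2
      push Not at h2
      exact hne ⟨h2.1, by linarith [h2.2]⟩
    have h1 := key _ _ _ h₀
    have h0 : cong l 0 := by
      rw [(h₀.inv 0).1, cong_iff (c := p₀) (by simp [S])]
      intro y hy
      have : y = p₀ := by
        simp only [S, List.mem_cons, mem_D] at hy
        rcases hy with rfl | rfl | hy
        · rfl
        · rw [h1.1]; ring
        · have hp := List.perm_cons_erase (l := x₀ :: xs₀) (a := y) (by simpa using hy)
          exact (key _ _ _ (h₀.trans (S_perm hp))).2
      simp [this]
    have := hm 0 h0
    rw [zero_dvd_iff] at this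
    omega
  classical
  obtain ⟨hg, p, x, xs, h, hgx⟩ := Nat.find_spec hex
  have hmin := fun g hlt => Nat.find_min hex (m := g) hlt
  generalize Nat.find hex = g at hg hgx hmin
  have h := h.trans (S_key_pos δ p x xs)
  rw [hgx] at h
  generalize x + δ = P at h
  have hg' : (0 : ℤ) < g := by exact_mod_cast hg
  have hgd : (g : ℤ) ∣ δ := hgx ▸ Int.gcd_dvd_left δ (x - p)
  obtain ⟨ys, hys, hh⟩ := S_settle' (δ := δ) (p := P) hg' xs
  have h := h.trans hh
  have hcong : cong l g := by
    rw [(h.inv g).1, cong_iff (c := P) (by simp [S])]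
    intro y hy
    simp only [S, List.mem_cons, mem_D] at hy
    rcases hy with rfl | rfl | hy
    · simp
    · simpa using hgd
    · rcases hy with rfl | hy
      · simp
      have hy2 := hys y hy
      by_contra hnd
      have hp := List.perm_cons_erase (l := (P + g) :: ys) (a := y) (by simp [hy])
      have hne : y - P ≠ 0 := by
        intro h; rw [h] at hnd; simp at hnd
      have hne2 : y - P ≠ g := by
        intro h; rw [h] at hnd; simp at hnd
      have hle : Int.gcd δ (y - P) ≤ (y - P).natAbs :=
        Nat.le_of_dvd (by omega) (Int.gcd_dvd_natAbs_right _ _)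
      refine hmin (Int.gcd δ (y - P)) (by omega) ⟨?_, P, y, _, h.trans (S_perm hp), rfl⟩
      rw [Int.gcd_pos_iff]; right; exact hne
  have e1 := hm _ hcong
  have e2 : d ∣ g := by
    have := ((h.inv d).1.1 hc) (P + g) (by simp [S]) P (by simp [S])
    simpa using this
  have : (g : ℤ) = d := Int.dvd_antisymm hg'.le hd.le e1 e2
  rw [this] at h
  exact ⟨P, ys, h⟩

theorem settle_d {l : List ℤ} {δ d p : ℤ} {xs : List ℤ} (hd : 0 < d) (hc : cong l d)
    (h : H l (S δ p ((p + d) :: xs))) :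
    ∃ xs', (∀ x ∈ xs', x = p ∨ x = p + d) ∧ H l (S δ p ((p + d) :: xs')) := by
  obtain ⟨ys, hys, hh⟩ := S_settle' (δ := δ) (p := p) hd xs
  have h := h.trans hh
  refine ⟨ys, ?_, h⟩
  intro x hx
  obtain ⟨c, hcx⟩ := ((h.inv d).1.1 hc) x (by simp [S, mem_D, hx]) p (by simp [S])
  have := hys x hx
  have h1 : 0 ≤ c := by nlinarith
  have h2 : c ≤ 1 := by nlinarith
  have : c = 0 ∨ c = 1 := by omega
  rcases this with rfl | rfl
  · left; linarith
  · right; linarith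

theorem count_D (z : ℤ) (xs : List ℤ) : (D xs).count z = 2 * xs.count z := by
  induction xs with
  | nil => rfl
  | cons x xs ih => simp only [D_cons, List.count_cons, ih]; split <;> omega

theorem D_map (f : ℤ → ℤ) (xs : List ℤ) : (D xs).map f = D (xs.map f) := by
  induction xs with
  | nil => rfl
  | cons x xs ih => simp [ih]

theorem perm_of_D {xs ys : List ℤ} (h : (D xs).Perm (D ys)) : xs.Perm ys := by
  rw [List.perm_iff_count] at h ⊢
  intro a
  have := h a
  rw [count_D, count_D] at this
  omega

theorem emod_ne {p d : ℤ} (hd : 0 < d) : (p + d) % (2 * d) ≠ p % (2 * d) := by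
  intro h
  have := Int.emod_eq_emod_iff_emod_sub_eq_zero.1 h
  have := Int.dvd_of_emod_eq_zero this
  rw [show p + d - p = d by ring] at this
  have := Int.le_of_dvd hd this
  omega

theorem same_p {l l' : List ℤ} {δ d p : ℤ} (hd : 0 < d) (hc : cong l d) (hc' : cong l' d)
    (hM : (l.map (fun x => x % (2 * d))).Perm (l'.map (fun x => x % (2 * d))))
    {xs ys : List ℤ} (h : H l (S δ p ((p + d) :: xs))) (h' : H l' (S δ p ((p + d) :: ys))) :
    H l l' := by
  obtain ⟨xs, hx, h⟩ := settle_d hd hc h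
  obtain ⟨ys, hy, h'⟩ := settle_d hd hc' h'
  have h1 := ((h.inv d).2 hc).symm.trans (hM.trans ((h'.inv d).2 hc'))
  simp only [S, List.map_cons, List.perm_cons, D_cons, D_map] at h1
  have h2 := (perm_of_D h1).map (fun z => if z = p % (2 * d) then p else p + d)
  have key : ∀ zs : List ℤ, (∀ x ∈ zs, x = p ∨ x = p + d) →
      (zs.map (fun x => x % (2 * d))).map (fun z => if z = p % (2 * d) then p else p + d) = zs := by
    intro zs hz
    rw [List.map_map]
    conv_rhs => rw [← List.map_id zs]
    apply List.map_congr_left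
    intro a ha
    rcases hz a ha with rfl | rfl
    · simp
    · simp [emod_ne hd]
  rw [key xs hx, key ys hy] at h2
  exact h.trans ((S_perm (h2.cons _)).trans h'.symm)

theorem even_shift {l : List ℤ} {δ d p : ℤ} (hd : 0 < d) (hc : cong l d) {xs : List ℤ}
    (h : H l (S δ p ((p + d) :: xs))) (k : ℤ) :
    H l (S δ (p + 2 * k * d) ((p + 2 * k * d + d) :: xs)) := by
  have hdv : d ∣ δ := by
    simpa using ((h.inv d).1.1 hc) p (by simp [S]) (p - δ) (by simp [S])
  exact h.trans (S_even hd hdv p xs k)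

theorem main_list {l l' : List ℤ} {δ d : ℤ} (hd : 0 < d) (hc : cong l d) (hc' : cong l' d)
    (hM : (l.map (fun x => x % (2 * d))).Perm (l'.map (fun x => x % (2 * d))))
    {p p' : ℤ} {xs ys : List ℤ} (h : H l (S δ p ((p + d) :: xs)))
    (h' : H l' (S δ p' ((p' + d) :: ys))) : H l l' := by
  have hdv : d ∣ δ := by
    simpa using ((h.inv d).1.1 hc) p (by simp [S]) (p - δ) (by simp [S])
  have hpp : d ∣ p' - p := by
    have h1 := ((h.inv d).2 hc).symm.trans (hM.trans ((h'.inv d).2 hc'))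
    have : p % (2 * d) ∈ (S δ p' ((p' + d) :: ys)).map (fun x => x % (2 * d)) :=
      h1.mem_iff.1 (by simp [S])
    obtain ⟨z, hz, hzp⟩ := List.mem_map.1 this
    have a1 := ((h'.inv d).1.1 hc') p' (by simp [S]) z hz
    have a2 : d ∣ z - p := (Dvd.intro_left 2 rfl).trans
      (Int.dvd_of_emod_eq_zero (Int.emod_eq_emod_iff_emod_sub_eq_zero.1 hzp))
    simpa using dvd_add a1 a2
  obtain ⟨c, hcp⟩ := hpp
  obtain ⟨e, he⟩ := hdv
  rcases Int.even_or_odd' c with ⟨k, rfl | rfl⟩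
  · have h2 := even_shift hd hc h k
    rw [show p + 2 * k * d = p' by linear_combination -hcp] at h2
    exact same_p hd hc hc' hM h2 h'
  · have h' := even_shift hd hc' h' (-k)
    rw [show p' + 2 * -k * d = p + d by linear_combination hcp] at h'
    rcases Int.even_or_odd' e with ⟨j, rfl | rfl⟩
    · exact same_p hd hc hc' hM (h.trans (S_odd1 (k := j) hd (by rw [he]; ring) p xs)) h'
    · obtain ⟨xs, hx, h⟩ := settle_d hd hc h
      have h1 := ((h.inv d).2 hc).symm.trans (hM.trans ((h'.inv d).2 hc'))
      have hmem : p ∈ xs := by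
        by_contra hn
        have hall : ∀ x ∈ xs, x = p + d := by
          intro x hxx
          rcases hx x hxx with rfl | h
          · exact absurd hxx hn
          · exact h
        have q1 : (p - δ) % (2 * d) = (p + d) % (2 * d) := by
          apply Int.emod_eq_emod_iff_emod_sub_eq_zero.2
          apply Int.emod_eq_zero_of_dvd
          exact ⟨-j - 1, by rw [he]; ring⟩
        have q2 : (p + d - δ) % (2 * d) = p % (2 * d) := by
          apply Int.emod_eq_emod_iff_emod_sub_eq_zero.2
          apply Int.emod_eq_zero_of_dvd
          exact ⟨-j, by rw [he]; ring⟩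
        have q3 : (p + d + d) % (2 * d) = p % (2 * d) := by
          rw [show p + d + d = p + 2 * d by ring]; simp
        have hcount := h1.count_eq (p % (2 * d))
        have hz : List.count (p % (2 * d)) (xs.map (fun x => x % (2 * d))) = 0 := by
          rw [List.count_eq_zero]
          intro hmm
          obtain ⟨z, hz, hzz⟩ := List.mem_map.1 hmm
          rw [hall z hz] at hzz
          exact emod_ne hd hzz
        simp only [S, List.map_cons, D_cons, D_map, q1, q2, q3, List.count_cons, count_D, hz,
          beq_iff_eq, emod_ne hd, if_true, if_false] at hcount
        omega
      obtain ⟨zs, hz⟩ := S_odd2 (δ := δ) (k := j) hd (by rw [he]; ring) p xs hmem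
      exact same_p hd hc hc' hM (h.trans hz) h'

theorem list_thm {m : ℕ} {l l' : List ℤ} (hl : l.length = 2 * m + 2) (hl' : l'.length = 2 * m + 2)
    {d : ℤ} (hd : 0 < d) (hc : cong l d) (hc' : cong l' d)
    (hm : ∀ k, cong l k → k ∣ d) (hm' : ∀ k, cong l' k → k ∣ d)
    (hs : l.alternatingSum = l'.alternatingSum)
    (hM : (l.map (fun x => x % (2 * d))).Perm (l'.map (fun x => x % (2 * d)))) : H l l' := by
  have hD : ∀ xs : List ℤ, (D xs).alternatingSum = 0 := by
    intro xs
    induction xs with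
    | nil => rfl
    | cons x xs ih => simp [List.alternatingSum_cons, ih]
  obtain ⟨p, q, xs, h, hx⟩ := toPairs m l hl
  obtain ⟨p', q', ys, h', hy⟩ := toPairs m l' hl'
  have e := h.altSum_eq
  have e' := h'.altSum_eq
  simp only [List.alternatingSum_cons, hD, sub_zero] at e e'
  obtain ⟨δ, hδ⟩ : ∃ δ, δ = p - q := ⟨_, rfl⟩
  obtain rfl : q = p - δ := by rw [hδ]; ring
  obtain rfl : q' = p' - δ := by linarith
  change H l (S δ p xs) at h
  change H l' (S δ p' ys) at h'
  match xs, ys, hx, hy with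
  | [], [], _, _ =>
    have a1 := ((h.inv d).2 hc).symm.trans (hM.trans ((h'.inv d).2 hc'))
    have : p % (2 * d) ∈ (S δ p' []).map (fun x => x % (2 * d)) :=
      a1.mem_iff.1 (by simp [S])
    obtain ⟨z, hz, hzp⟩ := List.mem_map.1 this
    have a1 := ((h'.inv d).1.1 hc') p' (by simp [S]) z hz
    have a2 : d ∣ z - p := (Dvd.intro_left 2 rfl).trans
      (Int.dvd_of_emod_eq_zero (Int.emod_eq_emod_iff_emod_sub_eq_zero.1 hzp))
    have a3 : δ ∣ d := by
      apply hm
      rw [(h.inv δ).1, cong_iff (c := p) (by simp [S])]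
      intro x hx
      simp only [S, List.mem_cons, mem_D] at hx
      rcases hx with rfl | rfl | hx
      · simp
      · simp
      · simp at hx
    obtain ⟨k, hk⟩ := a3.trans (by simpa using dvd_add a1 a2 : d ∣ p' - p)
    have := S_shift δ p [] k
    rw [show p + k * δ = p' by linear_combination -hk] at this
    exact h.trans (this.trans h'.symm)
  | x :: xs, y :: ys, _, _ =>
    obtain ⟨P, X, h⟩ := exists_norm hd hc hm h
    obtain ⟨P', Y, h'⟩ := exists_norm hd hc' hm' h'
    exact main_list hd hc hc' hM h h'
  | [], _ :: _, hx, hy => simp at hx hy; omega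
  | _ :: _, [], hx, hy => simp at hx hy; omega

/-! bridge -/

theorem cong_dval {n : ℕ} (v : Fin n → ℤ) (k : ℤ) : cong (List.ofFn v) k ↔ k ∣ (dval v : ℤ) := by
  rw [← Int.natAbs_dvd, Int.natCast_dvd_natCast, dval, Finset.dvd_gcd_iff]
  simp only [cong, List.forall_mem_ofFn_iff, Int.natAbs_dvd_natAbs]
  constructor
  · intro h b _; exact h _ _
  · intro h i j; exact h (i, j) (Finset.mem_univ _)

theorem altSum_list {n : ℕ} (v : Fin n → ℤ) : (List.ofFn v).alternatingSum = altSum v := by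
  rw [altSum, List.alternatingSum_eq_finsetSum]
  simp only [List.getElem_ofFn, smul_eq_mul]
  refine Fintype.sum_equiv (finCongr (by simp)) _ _ ?_
  intro i; simp; rfl

theorem Mres_list {n : ℕ} (v : Fin n → ℤ) (d : ℕ) :
    MresMod v d = ((List.ofFn v).map (fun x => x % (2 * (d : ℤ))) : Multiset ℤ) := by
  rw [MresMod, List.map_ofFn, Fin.univ_val_map]
  rfl

theorem H_of_move {n : ℕ} {v w : Fin n → ℤ} (h : IsHurwitzMove v w) :
    H (List.ofFn v) (List.ofFn w) := by
  obtain ⟨i, hi, h1, h2, h3⟩ := h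
  have e1 : List.ofFn v = (List.ofFn v).take i ++ v ⟨i, by omega⟩ :: v ⟨i + 1, hi⟩ ::
      (List.ofFn v).drop (i + 2) := by
    conv_lhs => rw [← List.take_append_drop i (List.ofFn v)]
    congr 1
    rw [List.drop_eq_getElem_cons (by simp; omega), List.drop_eq_getElem_cons (by simp; omega)]
    simp
  have e2 : List.ofFn w = (List.ofFn v).take i ++ v ⟨i + 1, hi⟩ ::
      (2 * v ⟨i + 1, hi⟩ - v ⟨i, by omega⟩) :: (List.ofFn v).drop (i + 2) := by
    conv_lhs => rw [← List.take_append_drop i (List.ofFn w)]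
    congr 1
    · apply List.ext_getElem
      · simp
      · intro j hj1 hj2
        simp at hj1 hj2
        simp only [List.getElem_take, List.getElem_ofFn]
        apply h3 <;> simp <;> omega
    · rw [List.drop_eq_getElem_cons (by simp; omega), List.drop_eq_getElem_cons (by simp; omega)]
      simp only [List.getElem_ofFn, h1, h2]
      congr 2
      apply List.ext_getElem
      · simp
      · intro j hj1 hj2
        simp only [List.getElem_drop, List.getElem_ofFn]
        apply h3 <;> simp <;> omega
  rw [e1, e2]
  exact H.move _ _ _ _

theorem H_of_equiv {n : ℕ} {v w : Fin n → ℤ} (h : HurwitzEquiv v w) :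
    H (List.ofFn v) (List.ofFn w) := by
  induction h with
  | refl => exact H.refl _
  | tail _ h ih =>
    rcases h with h | h
    · exact ih.trans (H_of_move h)
    · exact ih.trans (H_of_move h).symm

theorem equiv_symm {n : ℕ} {v w : Fin n → ℤ} (h : HurwitzEquiv v w) : HurwitzEquiv w v := by
  induction h with
  | refl => exact Relation.ReflTransGen.refl
  | tail _ h ih => exact Relation.ReflTransGen.head h.symm ih

theorem equiv_of_H {l l' : List ℤ} (h : H l l') : ∀ (n : ℕ) (v w : Fin n → ℤ),
    List.ofFn v = l → List.ofFn w = l' → HurwitzEquiv v w := by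
  induction h with
  | refl l =>
    intro n v w hv hw
    have : v = w := List.ofFn_injective (hv.trans hw.symm)
    rw [this]; exact Relation.ReflTransGen.refl
  | symm _ ih => intro n v w hv hw; exact equiv_symm (ih n w v hw hv)
  | @trans l l' l'' h1 h2 ih1 ih2 =>
    intro n v w hv hw
    have hn : l'.length = n := by rw [← h1.length_eq, ← hv]; simp
    subst hn
    exact (ih1 _ v l'.get hv (by simp)).trans (ih2 _ l'.get w (by simp) hw)
  | move l₁ a b l₂ =>
    intro n v w hv hw
    have hn : n = l₁.length + (l₂.length + 2) := by
      have := congrArg List.length hv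
      simpa using this
    apply Relation.ReflTransGen.single
    left
    have gv : ∀ j : Fin n, v j = (l₁ ++ a :: b :: l₂)[(j : ℕ)]'(by simp; omega) := by
      intro j
      simp [← hv]
    have gw : ∀ j : Fin n, w j = (l₁ ++ b :: (2 * b - a) :: l₂)[(j : ℕ)]'(by simp; omega) := by
      intro j
      simp [← hw]
    refine ⟨l₁.length, by omega, ?_, ?_, ?_⟩
    · simp [gv, gw]
    · simp [gv, gw]
    · intro j h1 h2
      rw [gv, gw]
      by_cases hj : (j : ℕ) < l₁.length
      · rw [List.getElem_append_left hj, List.getElem_append_left hj]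
      · rw [List.getElem_append_right (by omega), List.getElem_append_right (by omega)]
        obtain ⟨t, ht⟩ : ∃ t, (j : ℕ) - l₁.length = t + 2 := ⟨j - l₁.length - 2, by omega⟩
        simp [ht]

theorem dval_pos {n : ℕ} {v : Fin n → ℤ} (hv : ¬ IsTrivialVec v) : (0 : ℤ) < dval v := by
  rcases Nat.eq_zero_or_pos (dval v) with h | h
  · exfalso
    apply hv
    have := (cong_dval v 0).2 (by simp [h])
    intro i j
    have := this (v i) (by simp) (v j) (by simp)
    rw [zero_dvd_iff] at this
    linarith
  · exact_mod_cast h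

end Hz

/-- Two nontrivial vectors in ℤ^{2m} are Hurwitz equivalent iff they have the same
Δ, d, and M. -/
theorem stmt_5 (m : ℕ) (hm : 1 ≤ m) (v w : Fin (2 * m) → ℤ)
    (hv : ¬ IsTrivialVec v) (hw : ¬ IsTrivialVec w) :
    HurwitzEquiv v w ↔
      (altSum v = altSum w ∧ dval v = dval w ∧ Mres v = Mres w) := by
  constructor
  · intro h
    have h := Hz.H_of_equiv h
    have hd : dval v = dval w := by
      apply Nat.dvd_antisymm
      · have := (h.inv (dval v)).1.1 ((Hz.cong_dval v _).2 dvd_rfl)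
        exact Int.natCast_dvd_natCast.1 ((Hz.cong_dval w _).1 this)
      · have := (h.inv (dval w)).1.2 ((Hz.cong_dval w _).2 dvd_rfl)
        exact Int.natCast_dvd_natCast.1 ((Hz.cong_dval v _).1 this)
    refine ⟨?_, hd, ?_⟩
    · rw [← Hz.altSum_list, ← Hz.altSum_list, h.altSum_eq]
    · rw [Mres, Mres, ← hd, Hz.Mres_list, Hz.Mres_list, Multiset.coe_eq_coe]
      exact (h.inv (dval v)).2 ((Hz.cong_dval v _).2 dvd_rfl)
  · rintro ⟨h1, h2, h3⟩
    refine Hz.equiv_of_H ?_ _ v w rfl rfl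
    rw [Mres, Mres, ← h2, Hz.Mres_list, Hz.Mres_list, Multiset.coe_eq_coe] at h3
    refine Hz.list_thm (m := m - 1) (d := dval v) (by simp; omega) (by simp; omega)
      (Hz.dval_pos hv) ((Hz.cong_dval v _).2 dvd_rfl) ((Hz.cong_dval w _).2 (by rw [h2]))
      (fun k hk => (Hz.cong_dval v k).1 hk) (fun k hk => h2 ▸ (Hz.cong_dval w k).1 hk)
      (by rw [Hz.altSum_list, Hz.altSum_list, h1]) h3
end

section
/- Let m ≥ 1, let v = (a_1,…,a_{2m}) ∈ ℤ^{2m} be a nontrivial vector, and let k = k(v). Suppose there exists a fixed-point-free involution f of the index set {1,…,2m} such that a_i ≡ a_{f(i)} (mod 2^{k+1}) for every i. Then Δ(v) is divisible by 2^{k+1}. -/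
/-- If a fixed-point-free involution f of the indices pairs up entries of a nontrivial
vector v that are congruent modulo 2^{k(v)+1}, then 2^{k(v)+1} divides Δ(v). -/
theorem stmt_10 (m : ℕ) (hm : 1 ≤ m) (v : Fin (2 * m) → ℤ)
    (hv : ¬ IsTrivialVec v)
    (f : Fin (2 * m) → Fin (2 * m))
    (hinv : Function.Involutive f)
    (hfpf : ∀ i, f i ≠ i)
    (hcong : ∀ i, (2 : ℤ) ^ (kval v + 1) ∣ v i - v (f i)) :
    (2 : ℤ) ^ (kval v + 1) ∣ altSum v := by
  have h0 : ∀ i, (2 : ℤ) ^ kval v ∣ v i - v ⟨0, by omega⟩ := by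
    intro i
    have h1 : 2 ^ kval v ∣ dval v := pow_padicValNat_dvd
    have h2 : dval v ∣ (v i - v ⟨0, by omega⟩).natAbs :=
      Finset.gcd_dvd (f := fun p : Fin (2 * m) × Fin (2 * m) => (v p.1 - v p.2).natAbs)
        (Finset.mem_univ (i, ⟨0, by omega⟩))
    have h3 := Int.natCast_dvd.mpr (h1.trans h2)
    exact_mod_cast h3
  choose w hw using h0
  have hs : ∑ i : Fin (2 * m), (-1 : ℤ) ^ (i : ℕ) = 0 := by
    rw [Fin.sum_univ_eq_sum_range (fun i => (-1 : ℤ) ^ i), neg_one_geom_sum]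
    simp
  have e : altSum v = 2 ^ kval v * ∑ i : Fin (2 * m), (-1 : ℤ) ^ (i : ℕ) * w i := by
    have : altSum v = ∑ i : Fin (2 * m), ((-1 : ℤ) ^ (i : ℕ) * (v i - v ⟨0, by omega⟩)) := by
      simp only [mul_sub, Finset.sum_sub_distrib, ← Finset.sum_mul, hs, altSum]
      simp
    rw [this, Finset.mul_sum]
    refine Finset.sum_congr rfl fun i _ => ?_
    rw [hw]; ring
  have hp : ∀ i, (2 : ℤ) ∣ w i + w (f i) := by
    intro i
    have h1 := hcong i
    have h2 : v i - v (f i) = 2 ^ kval v * (w i - w (f i)) := by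
      rw [mul_sub, ← hw, ← hw]; ring
    rw [h2, pow_succ] at h1
    have h3 := Int.dvd_of_mul_dvd_mul_left (by positivity) h1
    omega
  rw [e, pow_succ]
  apply mul_dvd_mul_left
  have hz : ((∑ i : Fin (2 * m), (-1 : ℤ) ^ (i : ℕ) * w i : ℤ) : ZMod 2) = 0 := by
    have hneg : (-1 : ZMod 2) = 1 := by decide
    push_cast
    simp only [hneg, one_pow, one_mul]
    refine Finset.sum_involution (fun i _ => f i) ?_ ?_ ?_ ?_
    · intro i _
      have := (ZMod.intCast_zmod_eq_zero_iff_dvd (w i + w (f i)) 2).mpr (by exact_mod_cast hp i)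
      exact_mod_cast this
    · intro i _ _
      exact hfpf i
    · intro i _
      exact Finset.mem_univ _
    · intro i _
      exact hinv i
  exact_mod_cast (ZMod.intCast_zmod_eq_zero_iff_dvd _ 2).mp hz
end
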